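/- For 0 < λ < 1 let φ_λ = B ( W^{1/2}/(W+λ) · ω′ ) ∈ L²(I). Then for every 0 < ε < 3/5 there is a constant c_ε > 0 such that ‖φ_λ‖² ≤ c_ε λ^{−1/5 − ε} for all 0 < λ < 1; moreover P φ_λ = − φ_λ. -/

import Mathlib

open MeasureTheory Real Set Filter
open scoped Topology ENNReal ComplexConjugate

noncomputable section

/-- The fundamental periodic cell `I = [0, 2π)`. -/
def II : Set ℝ := Set.Ico 0 (2 * π)

/-- Lebesgue measure restricted to `I`. -/
def muI : Measure ℝ := volume.restrict II

/-- The dispersion relation `ω(x) = |sin(x/2)|`. -/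
def omg (x : ℝ) : ℝ := |Real.sin (x / 2)|

/-- `Ω(x,y,z) = ω(x) + ω(y) − ω(z) − ω(x+y−z)`. -/
def Omg (x y z : ℝ) : ℝ := omg x + omg y - omg z - omg (x + y - z)

/-- The representative of `x` modulo `2π` lying in `[0, 2π)`. -/
def mod2pi (x : ℝ) : ℝ := x - 2 * π * (⌊x / (2 * π)⌋ : ℝ)

/-- `h` on the fundamental cell: `h(x,z) = (z−x)/2 + 2 arcsin( tan(|z−x|/4) cos((x+z)/4) )`. -/
def h0 (x z : ℝ) : ℝ :=
  (z - x) / 2 + 2 * Real.arcsin (Real.tan (|z - x| / 4) * Real.cos ((x + z) / 4))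

/-- The extension of `h` to all of `ℝ²`: `h(x,z) = h(x mod 2π, z mod 2π) − (x − (x mod 2π))`. -/
def hFPU (x z : ℝ) : ℝ := h0 (mod2pi x) (mod2pi z) - (x - mod2pi x)

/-- `F₊(x,y) = (cos(x/2)+cos(y/2))² + 4 sin(x/2) sin(y/2)`. -/
def Fp (x y : ℝ) : ℝ :=
  (Real.cos (x / 2) + Real.cos (y / 2)) ^ 2 + 4 * Real.sin (x / 2) * Real.sin (y / 2)

/-- `F₋(x,y) = (cos(x/2)+cos(y/2))² − 4 sin(x/2) sin(y/2)`. -/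
def Fm (x y : ℝ) : ℝ :=
  (Real.cos (x / 2) + Real.cos (y / 2)) ^ 2 - 4 * Real.sin (x / 2) * Real.sin (y / 2)

/-- The kernel `K₁(x,y) = 4·𝟙(F₋(x,y) > 0)/√(F₋(x,y))`. -/
def K1 (x y : ℝ) : ℝ := if 0 < Fm x y then 4 / Real.sqrt (Fm x y) else 0

/-- The kernel `K₂(x,y) = 2/√(F₊(x,y))`. -/
def K2 (x y : ℝ) : ℝ := 2 / Real.sqrt (Fp x y)

/-- `V(x) = ∫_I K₂(x,y) dy`. -/
def VV (x : ℝ) : ℝ := ∫ y in II, K2 x y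

/-- `W(x) = sin²(x/2)·V(x)`. -/
def WW (x : ℝ) : ℝ := Real.sin (x / 2) ^ 2 * VV x

/-- `ω′(x) = (1/2)cos(x/2)` on `(0,2π)`, `ω′(0) = 0`. -/
def omg' (x : ℝ) : ℝ := if x = 0 then 0 else Real.cos (x / 2) / 2

/-- The kernel of `B`: `B(x,y) = V(x)^{−1/2}(2K₂(x,y)−K₁(x,y))V(y)^{−1/2}`. -/
def Bker (x y : ℝ) : ℝ :=
  VV x ^ (-(1 : ℝ) / 2) * (2 * K2 x y - K1 x y) * VV y ^ (-(1 : ℝ) / 2)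

/-- `φ_λ = B (W^{1/2}/(W+λ) ω′)`, computed via the kernel of `B`. -/
def phiLam (lam x : ℝ) : ℝ :=
  ∫ y in II, Bker x y * (Real.sqrt (WW y) / (WW y + lam) * omg' y)

lemma int_II_eq (f : ℝ → ℝ) : ∫ y in II, f y = ∫ y in Ioo 0 (2 * π), f y := by
  unfold II
  rw [integral_Ico_eq_integral_Ioo]

lemma int_II_reflect (f : ℝ → ℝ) : ∫ y in II, f y = ∫ y in II, f (2 * π - y) := by
  have h : ∀ g : ℝ → ℝ, ∫ y in II, g y = ∫ y in (0 : ℝ)..(2 * π), g y := by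
    intro g
    rw [intervalIntegral.integral_of_le (by positivity), int_II_eq, integral_Ioc_eq_integral_Ioo]
  rw [h, h, intervalIntegral.integral_comp_sub_left]
  simp

lemma sin_refl (x : ℝ) : Real.sin ((2 * π - x) / 2) = Real.sin (x / 2) := by
  rw [show (2 * π - x) / 2 = π - x / 2 by ring, Real.sin_pi_sub]

lemma cos_refl (x : ℝ) : Real.cos ((2 * π - x) / 2) = -Real.cos (x / 2) := by
  rw [show (2 * π - x) / 2 = π - x / 2 by ring, Real.cos_pi_sub]

lemma Fp_refl (x y : ℝ) : Fp (2 * π - x) (2 * π - y) = Fp x y := by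
  unfold Fp; rw [sin_refl, sin_refl, cos_refl, cos_refl]; ring

lemma Fm_refl (x y : ℝ) : Fm (2 * π - x) (2 * π - y) = Fm x y := by
  unfold Fm; rw [sin_refl, sin_refl, cos_refl, cos_refl]; ring

lemma K1_refl (x y : ℝ) : K1 (2 * π - x) (2 * π - y) = K1 x y := by
  unfold K1; rw [Fm_refl]

lemma K2_refl (x y : ℝ) : K2 (2 * π - x) (2 * π - y) = K2 x y := by
  unfold K2; rw [Fp_refl]

lemma VV_refl (x : ℝ) : VV (2 * π - x) = VV x := by
  unfold VV
  rw [int_II_reflect]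
  simp only [K2_refl]

lemma WW_refl (x : ℝ) : WW (2 * π - x) = WW x := by
  unfold WW; rw [VV_refl, sin_refl]

lemma phi_antisymm (lam x : ℝ) : phiLam lam (2 * π - x) = -phiLam lam x := by
  unfold phiLam
  rw [int_II_reflect, int_II_eq, int_II_eq, ← integral_neg]
  apply setIntegral_congr_fun measurableSet_Ioo
  intro y hy
  have h1 : y ≠ 0 := hy.1.ne'
  have h2 : 2 * π - y ≠ 0 := by linarith [hy.2]
  simp only [Bker, VV_refl, WW_refl, K1_refl, K2_refl, omg', h1, h2, if_false, cos_refl]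
  ring

lemma sin_half_pos {x : ℝ} (hx : x ∈ Ioo (0 : ℝ) (2 * π)) : 0 < Real.sin (x / 2) :=
  Real.sin_pos_of_pos_of_lt_pi (by linarith [hx.1]) (by linarith [hx.2])

lemma refl_mem {x : ℝ} (hx : x ∈ Ioo (0 : ℝ) (2 * π)) : 2 * π - x ∈ Ioo (0 : ℝ) (2 * π) :=
  ⟨by linarith [hx.2], by linarith [hx.1]⟩

lemma integrable_refl {f : ℝ → ℝ} (hf : IntegrableOn f (Ioo 0 (2 * π))) :
    IntegrableOn (fun y => f (2 * π - y)) (Ioo 0 (2 * π)) := by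
  have h0 : (0 : ℝ) ≤ 2 * π := by positivity
  rw [← integrableOn_Ioc_iff_integrableOn_Ioo,
    ← intervalIntegrable_iff_integrableOn_Ioc_of_le h0] at hf ⊢
  have := hf.comp_sub_left (2 * π)
  simp only [sub_zero, sub_self] at this
  exact this.symm

lemma integrable_rpow_base {a : ℝ} (ha : a < 1) :
    IntegrableOn (fun y : ℝ => (y / π) ^ (-a)) (Ioo 0 (2 * π)) := by
  have h0 : (0 : ℝ) ≤ 2 * π := by positivity
  have h1 : IntegrableOn (fun y : ℝ => y ^ (-a) * (π ^ (-a))⁻¹) (Ioo 0 (2 * π)) := by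
    rw [← integrableOn_Ioc_iff_integrableOn_Ioo,
      ← intervalIntegrable_iff_integrableOn_Ioc_of_le h0]
    exact (intervalIntegral.intervalIntegrable_rpow' (by linarith)).mul_const _
  refine h1.congr_fun ?_ measurableSet_Ioo
  intro y hy
  simp only
  rw [Real.div_rpow hy.1.le Real.pi_pos.le, div_eq_mul_inv]

lemma sin_rpow_le {a : ℝ} (ha0 : 0 ≤ a) {y : ℝ} (hy : y ∈ Ioo (0 : ℝ) (2 * π)) :
    Real.sin (y / 2) ^ (-a) ≤ (y / π) ^ (-a) + ((2 * π - y) / π) ^ (-a) := by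
  have key : ∀ y ∈ Ioo (0 : ℝ) (2 * π), y ≤ π →
      Real.sin (y / 2) ^ (-a) ≤ (y / π) ^ (-a) := by
    intro y hy hy1
    have h := Real.mul_le_sin (x := y / 2) (by linarith [hy.1]) (by linarith)
    have h2 : 2 / π * (y / 2) = y / π := by ring
    rw [h2] at h
    exact Real.rpow_le_rpow_of_nonpos (div_pos hy.1 Real.pi_pos) h (by linarith)
  have hy' := refl_mem hy
  have p1 : 0 ≤ (y / π) ^ (-a) := Real.rpow_nonneg (div_nonneg hy.1.le Real.pi_pos.le) _
  have p2 : 0 ≤ ((2 * π - y) / π) ^ (-a) :=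
    Real.rpow_nonneg (div_nonneg hy'.1.le Real.pi_pos.le) _
  rcases le_total y π with h | h
  · linarith [key y hy h]
  · have := key _ hy' (by linarith)
    rw [sin_refl] at this
    linarith

lemma integrable_sin_rpow {a : ℝ} (ha0 : 0 ≤ a) (ha : a < 1) :
    IntegrableOn (fun y : ℝ => Real.sin (y / 2) ^ (-a)) (Ioo 0 (2 * π)) := by
  have h := (integrable_rpow_base ha).add (integrable_refl (integrable_rpow_base ha))
  refine Integrable.mono' h ?_ ?_
  · exact (Measurable.pow_const (by fun_prop) _).aestronglyMeasurable
  · filter_upwards [ae_restrict_mem measurableSet_Ioo] with y hy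
    rw [Real.norm_of_nonneg (Real.rpow_nonneg (sin_half_pos hy).le _)]
    exact sin_rpow_le ha0 hy

lemma Fp_ge {x y : ℝ} : 4 * (Real.sin (x / 2) * Real.sin (y / 2)) ≤ Fp x y := by
  unfold Fp; nlinarith [sq_nonneg (Real.cos (x / 2) + Real.cos (y / 2))]

lemma K2_nonneg (x y : ℝ) : 0 ≤ K2 x y := by unfold K2; positivity

lemma K1_nonneg (x y : ℝ) : 0 ≤ K1 x y := by unfold K1; split_ifs <;> positivity

lemma K2_le {x y : ℝ} (hx : x ∈ Ioo (0 : ℝ) (2 * π)) (hy : y ∈ Ioo (0 : ℝ) (2 * π)) :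
    K2 x y ≤ Real.sin (x / 2) ^ (-(1 / 2) : ℝ) * Real.sin (y / 2) ^ (-(1 / 2) : ℝ) := by
  have hs := sin_half_pos hx
  have ht := sin_half_pos hy
  rw [← Real.mul_rpow hs.le ht.le, Real.rpow_neg (by positivity), ← Real.sqrt_eq_rpow]
  have hp : 0 < Real.sin (x / 2) * Real.sin (y / 2) := by positivity
  unfold K2
  have h : 2 * √(Real.sin (x / 2) * Real.sin (y / 2)) ≤ √(Fp x y) := by
    apply Real.le_sqrt_of_sq_le
    rw [mul_pow, Real.sq_sqrt hp.le]
    linarith [@Fp_ge x y]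
  have h3 : 0 < √(Real.sin (x / 2) * Real.sin (y / 2)) := Real.sqrt_pos.2 hp
  rw [inv_eq_one_div, div_le_div_iff₀ (by linarith) h3]
  linarith

lemma K2_integrable {x : ℝ} (hx : x ∈ Ioo (0 : ℝ) (2 * π)) :
    IntegrableOn (K2 x) (Ioo 0 (2 * π)) := by
  have h := (integrable_sin_rpow (a := 1 / 2) (by norm_num) (by norm_num)).const_mul
    (Real.sin (x / 2) ^ (-(1 / 2) : ℝ))
  refine Integrable.mono' h ?_ ?_
  · apply Measurable.aestronglyMeasurable
    unfold K2 Fp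
    fun_prop
  · filter_upwards [ae_restrict_mem measurableSet_Ioo] with y hy
    rw [Real.norm_of_nonneg (K2_nonneg _ _)]
    exact K2_le hx hy

lemma VV_lower_aux {x : ℝ} (hx : x ∈ Ioo (0 : ℝ) (2 * π)) (hx1 : x ≤ π) :
    Real.sin (x / 2) ^ (-(1 / 3) : ℝ) ≤ VV x := by
  have hs := sin_half_pos hx
  set s := Real.sin (x / 2) with hsdef
  have hs1 : s ≤ 1 := Real.sin_le_one _
  set r := s ^ (1 / 3 : ℝ) with hr
  have hr0 : 0 < r := Real.rpow_pos_of_pos hs _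
  have hr1 : r ≤ 1 := Real.rpow_le_one hs.le hs1 (by norm_num)
  have hr3 : r ^ 3 = s := by
    rw [hr, ← Real.rpow_natCast, ← Real.rpow_mul hs.le]; norm_num
  have hpi := Real.pi_gt_three
  have hsub : Ioo (2 * π - 2 * r) (2 * π) ⊆ Ioo 0 (2 * π) :=
    Ioo_subset_Ioo_left (by linarith)
  have hK : ∀ y ∈ Ioo (2 * π - 2 * r) (2 * π), 2 / (3 * r ^ 2) ≤ K2 x y := by
    intro y hy
    have hb0 : 0 < π - y / 2 := by linarith [hy.2]
    have hb1 : π - y / 2 < r := by linarith [hy.1]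
    have e1 : Real.sin (y / 2) = Real.sin (π - y / 2) := by rw [Real.sin_pi_sub]
    have e2 : Real.cos (y / 2) = -Real.cos (π - y / 2) := by rw [Real.cos_pi_sub]; ring
    set b := π - y / 2
    have c1 : Real.sin b ≤ b := Real.sin_le hb0.le
    have c2 : 1 - b ^ 2 / 2 ≤ Real.cos b := Real.one_sub_sq_div_two_le_cos
    have c3 : Real.cos b ≤ 1 := Real.cos_le_one _
    have c4 : 0 ≤ Real.cos (x / 2) :=
      Real.cos_nonneg_of_mem_Icc ⟨by linarith [hx.1], by linarith⟩
    have c5 : Real.cos (x / 2) ≤ 1 := Real.cos_le_one _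
    have c6 : s ^ 2 + Real.cos (x / 2) ^ 2 = 1 := Real.sin_sq_add_cos_sq _
    have hs2 : s ^ 2 ≤ r ^ 2 := by
      rw [← hr3]; apply pow_le_pow_left₀ (by positivity)
      calc r ^ 3 = r ^ 2 * r := by ring
        _ ≤ 1 * r := by gcongr; nlinarith
        _ = r := one_mul r
    have hb2 : b ^ 2 ≤ r ^ 2 := by gcongr
    have hX : (Real.cos (x / 2) - Real.cos b) ^ 2 ≤ (r ^ 2) ^ 2 := by
      apply sq_le_sq'
      · nlinarith
      · nlinarith
    have hF : Fp x y ≤ (3 * r ^ 2) ^ 2 := by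
      unfold Fp
      rw [e1, e2, ← hsdef]
      have : s * Real.sin b ≤ r ^ 3 * r := by
        rw [hr3]; gcongr; linarith
      nlinarith [sq_nonneg (r ^ 2)]
    have hFpos : 0 < Fp x y := by
      have := @Fp_ge x y
      have h2 := sin_half_pos (hsub hy)
      have : 0 < s * Real.sin (y / 2) := by positivity
      linarith
    unfold K2
    have : √(Fp x y) ≤ 3 * r ^ 2 := Real.sqrt_le_iff.2 ⟨by positivity, hF⟩
    have h4 : 0 < √(Fp x y) := Real.sqrt_pos.2 hFpos
    gcongr
  have hint := K2_integrable hx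
  have h1 : ∫ y in Ioo (2 * π - 2 * r) (2 * π), (2 / (3 * r ^ 2) : ℝ) ≤
      ∫ y in Ioo (2 * π - 2 * r) (2 * π), K2 x y :=
    setIntegral_mono_on (integrableOn_const measure_Ioo_lt_top.ne) (hint.mono_set hsub) measurableSet_Ioo hK
  have h2 : ∫ y in Ioo (2 * π - 2 * r) (2 * π), K2 x y ≤ VV x := by
    unfold VV
    rw [int_II_eq]
    exact setIntegral_mono_set hint (ae_of_all _ fun y => K2_nonneg x y) hsub.eventuallyLE
  have h3 : ∫ y in Ioo (2 * π - 2 * r) (2 * π), (2 / (3 * r ^ 2) : ℝ) = 4 / 3 * r⁻¹ := by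
    rw [setIntegral_const, Measure.real, Real.volume_Ioo, ENNReal.toReal_ofReal (by linarith),
      smul_eq_mul]
    field_simp
    ring
  rw [Real.rpow_neg hs.le, ← hr]
  have : 0 < r⁻¹ := by positivity
  linarith

lemma VV_lower {x : ℝ} (hx : x ∈ Ioo (0 : ℝ) (2 * π)) :
    Real.sin (x / 2) ^ (-(1 / 3) : ℝ) ≤ VV x := by
  rcases le_total x π with h | h
  · exact VV_lower_aux hx h
  · have := VV_lower_aux (refl_mem hx) (by linarith)
    rwa [sin_refl, VV_refl] at this

lemma VV_pos {x : ℝ} (hx : x ∈ Ioo (0 : ℝ) (2 * π)) : 0 < VV x :=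
  (Real.rpow_pos_of_pos (sin_half_pos hx) _).trans_le (VV_lower hx)

/-- the numerator of `F₋` in the half-angle tangents -/
def NN (p q : ℝ) : ℝ := (1 - p ^ 2 * q ^ 2) ^ 2 - 4 * p * q * (1 + p ^ 2) * (1 + q ^ 2)

lemma NN_root {p : ℝ} (hp : 0 < p) : ∃ r, 0 < r ∧ p * r < 1 ∧ NN p r = 0 := by
  have hc : ContinuousOn (NN p) (Icc 0 p⁻¹) := by unfold NN; fun_prop
  have h := intermediate_value_Ioo' (inv_pos.2 hp).le hc
  have h0 : NN p 0 = 1 := by simp [NN]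
  have h1 : NN p p⁻¹ < 0 := by
    have : p ^ 2 * p⁻¹ ^ 2 = 1 := by field_simp
    unfold NN
    rw [this]
    have : 0 < 4 * p * p⁻¹ * (1 + p ^ 2) * (1 + p⁻¹ ^ 2) := by positivity
    linarith
  obtain ⟨r, hr, hr2⟩ := h ⟨h1, by rw [h0]; norm_num⟩
  refine ⟨r, hr.1, ?_, hr2⟩
  have := mul_lt_mul_of_pos_left hr.2 hp
  rwa [mul_inv_cancel₀ hp.ne'] at this

lemma NN_nonpos {p q r : ℝ} (hp : 0 < p) (hr : 0 < r) (h0 : NN p r = 0)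
    (hrq : r ≤ q) (hq : p * q < 1) : NN p q ≤ 0 := by
  unfold NN at *
  have hq0 : 0 < q := hr.trans_le hrq
  have h1 : 4 * p * r * (1 + p ^ 2) * (1 + r ^ 2) ≤ 4 * p * q * (1 + p ^ 2) * (1 + q ^ 2) := by
    gcongr
  have h2 : (1 - p ^ 2 * q ^ 2) ^ 2 ≤ (1 - p ^ 2 * r ^ 2) ^ 2 := by
    apply pow_le_pow_left₀
    · have : (p * q) ^ 2 ≤ 1 := pow_le_one₀ (by positivity) hq.le
      rw [mul_pow] at this; linarith
    · gcongr
  linarith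

lemma NN_lower {p q r : ℝ} (hp : 0 < p) (hr : 0 < r) (h0 : NN p r = 0) (hpr : p * r < 1)
    (hq : 0 < q) (hqr : q < r) :
    4 * p * (1 + p ^ 2) * (1 + q ^ 2) * (r - q) ≤ NN p q := by
  unfold NN at *
  have h2 : (1 - p ^ 2 * r ^ 2) ^ 2 ≤ (1 - p ^ 2 * q ^ 2) ^ 2 := by
    apply pow_le_pow_left₀
    · have : (p * r) ^ 2 ≤ 1 := pow_le_one₀ (by positivity) hpr.le
      rw [mul_pow] at this; linarith
    · gcongr
  have h3 : 4 * p * r * (1 + p ^ 2) * (1 + q ^ 2) ≤ 4 * p * r * (1 + p ^ 2) * (1 + r ^ 2) := by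
    gcongr
  linarith

lemma half_angle {x : ℝ} (hx : x ∈ Ioo (0 : ℝ) (2 * π)) :
    0 < Real.tan (x / 4) ∧
    Real.sin (x / 2) = 2 * Real.tan (x / 4) / (1 + Real.tan (x / 4) ^ 2) ∧
    Real.cos (x / 2) = (1 - Real.tan (x / 4) ^ 2) / (1 + Real.tan (x / 4) ^ 2) := by
  have hc : 0 < Real.cos (x / 4) :=
    Real.cos_pos_of_mem_Ioo ⟨by linarith [hx.1, Real.pi_pos], by linarith [hx.2]⟩
  have hs := Real.sin_sq_add_cos_sq (x / 4)
  refine ⟨Real.tan_pos_of_pos_of_lt_pi_div_two (by linarith [hx.1]) (by linarith [hx.2]), ?_, ?_⟩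
  · rw [show x / 2 = 2 * (x / 4) by ring, Real.sin_two_mul, Real.tan_eq_sin_div_cos]
    field_simp
    rw [add_comm] at hs
    rw [hs, mul_one]
  · rw [show x / 2 = 2 * (x / 4) by ring, Real.cos_two_mul, Real.tan_eq_sin_div_cos]
    field_simp
    rw [add_comm] at hs
    rw [hs]
    linarith

lemma Fm_eq {x y : ℝ} (hx : x ∈ Ioo (0 : ℝ) (2 * π)) (hy : y ∈ Ioo (0 : ℝ) (2 * π)) :
    Fm x y = 4 * NN (Real.tan (x / 4)) (Real.tan (y / 4)) /
      ((1 + Real.tan (x / 4) ^ 2) * (1 + Real.tan (y / 4) ^ 2)) ^ 2 := by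
  obtain ⟨hp, h1, h2⟩ := half_angle hx
  obtain ⟨hq, h3, h4⟩ := half_angle hy
  unfold Fm NN
  rw [h1, h2, h3, h4]
  set p := Real.tan (x / 4)
  set q := Real.tan (y / 4)
  field_simp
  ring

lemma tan_mul_lt {x y : ℝ} (hx : x ∈ Ioo (0 : ℝ) (2 * π)) (hy : y ∈ Ioo (0 : ℝ) (2 * π))
    (hxy : x + y < 2 * π) : Real.tan (x / 4) * Real.tan (y / 4) < 1 := by
  have hc : 0 < Real.cos (x / 4) :=
    Real.cos_pos_of_mem_Ioo ⟨by linarith [hx.1, Real.pi_pos], by linarith [hx.2]⟩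
  have hc' : 0 < Real.cos (y / 4) :=
    Real.cos_pos_of_mem_Ioo ⟨by linarith [hy.1, Real.pi_pos], by linarith [hy.2]⟩
  have h : 0 < Real.cos (x / 4 + y / 4) :=
    Real.cos_pos_of_mem_Ioo ⟨by linarith [hx.1, hy.1, Real.pi_pos], by linarith⟩
  rw [Real.cos_add] at h
  rw [Real.tan_eq_sin_div_cos, Real.tan_eq_sin_div_cos, div_mul_div_comm, div_lt_one (by positivity)]
  linarith

/-- dominating function, `r` the root -/
def Hr (r y : ℝ) : ℝ :=
  (1 + Real.tan (y / 4) ^ 2) / √(Real.tan (y / 4) * (r - Real.tan (y / 4)))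

lemma K1_pointwise {x y r : ℝ} (hx : x ∈ Ioo (0 : ℝ) (2 * π)) (hr : 0 < r)
    (hpr : Real.tan (x / 4) * r < 1) (h0 : NN (Real.tan (x / 4)) r = 0)
    (hy : y ∈ Ioo (0 : ℝ) (2 * π)) (hqr : Real.tan (y / 4) < r) :
    K1 x y * Real.sin (y / 2) ^ (-(1 / 2) : ℝ) ≤
      Real.sin (x / 2) ^ (-(1 / 2) : ℝ) * Hr r y := by
  have hF := Fm_eq hx hy
  obtain ⟨hp, h1, -⟩ := half_angle hx
  obtain ⟨hq, h3, -⟩ := half_angle hy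
  have hs := sin_half_pos hx
  have ht := sin_half_pos hy
  have hN := NN_lower hp hr h0 hpr hq hqr
  unfold Hr
  rw [Real.rpow_neg hs.le, Real.rpow_neg ht.le, ← Real.sqrt_eq_rpow, ← Real.sqrt_eq_rpow]
  set p := Real.tan (x / 4)
  set q := Real.tan (y / 4)
  have hrq : 0 < r - q := by linarith
  have hlow : 0 < 4 * p * (1 + p ^ 2) * (1 + q ^ 2) * (r - q) := by positivity
  have hNp : 0 < NN p q := hlow.trans_le hN
  have hFp : 0 < Fm x y := by rw [hF]; positivity
  unfold K1
  rw [if_pos hFp]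
  have hle : 16 * p * (r - q) / ((1 + p ^ 2) * (1 + q ^ 2)) ≤ Fm x y := by
    rw [hF, div_le_div_iff₀ (by positivity) (by positivity)]
    have : 0 < (1 + p ^ 2) * (1 + q ^ 2) := by positivity
    have := mul_le_mul_of_nonneg_left hN (a := 4 * ((1 + p ^ 2) * (1 + q ^ 2))) (by positivity)
    linarith
  -- compare squares
  have e1 : 4 / √(Fm x y) * (√(Real.sin (y / 2)))⁻¹ = 4 / √(Fm x y * Real.sin (y / 2)) := by
    rw [Real.sqrt_mul hFp.le]; field_simp
  have e2 : (√(Real.sin (x / 2)))⁻¹ * ((1 + q ^ 2) / √(q * (r - q))) =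
      4 / √(16 * (Real.sin (x / 2) * (q * (r - q)) / (1 + q ^ 2) ^ 2)) := by
    have h16 : √(16 : ℝ) = 4 := by
      rw [show (16 : ℝ) = 4 ^ 2 by norm_num]; exact Real.sqrt_sq (by norm_num)
    rw [Real.sqrt_mul (show (0 : ℝ) ≤ 16 by norm_num), h16, Real.sqrt_div (by positivity),
      Real.sqrt_sq (by positivity), Real.sqrt_mul hs.le]
    have : 0 < √(Real.sin (x / 2)) := Real.sqrt_pos.2 hs
    have : 0 < √(q * (r - q)) := Real.sqrt_pos.2 (by positivity)
    field_simp
  rw [e1, e2]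
  have hpos : 0 < 16 * (Real.sin (x / 2) * (q * (r - q)) / (1 + q ^ 2) ^ 2) := by positivity
  have hsq : 0 < √(16 * (Real.sin (x / 2) * (q * (r - q)) / (1 + q ^ 2) ^ 2)) :=
    Real.sqrt_pos.2 hpos
  apply div_le_div_of_nonneg_left (by norm_num) hsq
  apply Real.sqrt_le_sqrt
  calc 16 * (Real.sin (x / 2) * (q * (r - q)) / (1 + q ^ 2) ^ 2)
      = 16 * p * (r - q) / ((1 + p ^ 2) * (1 + q ^ 2)) * Real.sin (y / 2) := by
        rw [h1, h3]; field_simp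
    _ ≤ _ := by gcongr

lemma Hr_int {r : ℝ} (hr : 0 < r) :
    IntegrableOn (Hr r) (Ioo 0 (4 * Real.arctan r)) ∧
      ∫ y in Ioo 0 (4 * Real.arctan r), Hr r y = 4 * π := by
  have hy0 : 0 < 4 * Real.arctan r := by
    have := Real.arctan_pos.2 hr; linarith
  have hlt : Real.arctan r < π / 2 := Real.arctan_lt_pi_div_two r
  set y0 := 4 * Real.arctan r with hy0d
  let Θ : ℝ → ℝ := fun y => 8 * Real.arcsin (√(Real.tan (y / 4) / r))
  have hcosne : ∀ y ∈ Icc 0 y0, Real.cos (y / 4) ≠ 0 := by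
    intro y hy
    apply ne_of_gt
    apply Real.cos_pos_of_mem_Ioo
    constructor <;> linarith [hy.1, hy.2, Real.pi_pos]
  have hcont : ContinuousOn Θ (Icc 0 y0) := by
    have h1 : ContinuousOn (fun y : ℝ => Real.tan (y / 4)) (Icc 0 y0) := by
      intro y hy
      exact ((Real.continuousAt_tan.2 (hcosne y hy)).comp
        (f := fun y : ℝ => y / 4) (by fun_prop)).continuousWithinAt
    exact (Real.continuous_arcsin.comp_continuousOn
      (Real.continuous_sqrt.comp_continuousOn (h1.div_const r))).const_mul 8 |> fun h => h
  have hrange : ∀ y ∈ Ioo 0 y0, 0 < Real.tan (y / 4) ∧ Real.tan (y / 4) < r := by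
    intro y hy
    refine ⟨Real.tan_pos_of_pos_of_lt_pi_div_two (by linarith [hy.1]) (by linarith [hy.2]), ?_⟩
    have := Real.tan_lt_tan_of_lt_of_lt_pi_div_two (x := y / 4) (y := Real.arctan r)
      (by linarith [hy.1, Real.pi_pos]) hlt (by linarith [hy.2])
    rwa [Real.tan_arctan] at this
  have hderiv : ∀ y ∈ Ioo 0 y0, HasDerivAt Θ (Hr r y) y := by
    intro y hy
    obtain ⟨hq, hqr⟩ := hrange y hy
    have hc := hcosne y (Ioo_subset_Icc_self hy)
    have d1 : HasDerivAt (fun y : ℝ => Real.tan (y / 4)) (1 / Real.cos (y / 4) ^ 2 * (1 / 4)) y :=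
      HasDerivAt.comp (h₂ := Real.tan) (h := fun y : ℝ => y / 4) y (Real.hasDerivAt_tan hc)
        ((hasDerivAt_id y).div_const 4)
    have hz0 : 0 < Real.tan (y / 4) / r := by positivity
    have hz1 : Real.tan (y / 4) / r < 1 := (div_lt_one hr).2 hqr
    have hw0 : 0 < √(Real.tan (y / 4) / r) := Real.sqrt_pos.2 hz0
    have hw1 : √(Real.tan (y / 4) / r) < 1 := by
      rw [Real.sqrt_lt' one_pos]; simpa using hz1
    have d2 := (d1.div_const r).sqrt hz0.ne'
    have d3 := ((Real.hasDerivAt_arcsin (x := √(Real.tan (y / 4) / r)) (by linarith)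
      hw1.ne).comp y d2).const_mul 8
    refine d3.congr_deriv ?_
    have hcc : 1 / Real.cos (y / 4) ^ 2 = 1 + Real.tan (y / 4) ^ 2 := by
      rw [Real.tan_eq_sin_div_cos]; field_simp
      linarith [Real.sin_sq_add_cos_sq (y / 4)]
    rw [hcc, Real.sq_sqrt hz0.le]
    unfold Hr
    set q := Real.tan (y / 4)
    have hrq : 0 < r - q := by linarith
    have e1 : √(1 - q / r) = √(r - q) / √r := by
      rw [← Real.sqrt_div hrq.le]; congr 1; field_simp
    have e2 : √(q / r) = √q / √r := Real.sqrt_div hq.le _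
    have hsr : 0 < √r := Real.sqrt_pos.2 hr
    have hsq : 0 < √q := Real.sqrt_pos.2 hq
    have hsrq : 0 < √(r - q) := Real.sqrt_pos.2 hrq
    have hrr : √r ^ 2 = r := Real.sq_sqrt hr.le
    rw [e1, e2, Real.sqrt_mul hq.le]
    field_simp
    rw [hrr]
    ring
  have hnn : ∀ y ∈ Ioo 0 y0, 0 ≤ Hr r y := by
    intro y hy
    unfold Hr; positivity
  have hI : IntegrableOn (Hr r) (Ioc 0 y0) :=
    intervalIntegral.integrableOn_deriv_of_nonneg hcont hderiv hnn
  refine ⟨hI.mono_set Ioo_subset_Ioc_self, ?_⟩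
  have h := intervalIntegral.integral_eq_sub_of_hasDerivAt_of_le hy0.le hcont hderiv
    ((intervalIntegrable_iff_integrableOn_Ioc_of_le hy0.le).2 hI)
  rw [← integral_Ioc_eq_integral_Ioo, ← intervalIntegral.integral_of_le hy0.le, h]
  simp only [Θ, hy0d]
  rw [show 4 * Real.arctan r / 4 = Real.arctan r by ring, Real.tan_arctan, div_self hr.ne']
  simp
  ring

lemma K1_half {x : ℝ} (hx : x ∈ Ioo (0 : ℝ) (2 * π)) :
    ∃ G : ℝ → ℝ, IntegrableOn G (Ioo 0 (2 * π)) ∧ (∀ y, 0 ≤ G y) ∧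
      ∫ y in Ioo 0 (2 * π), G y = 4 * π ∧
      ∀ y ∈ Ioo (0 : ℝ) (2 * π), x + y < 2 * π →
        K1 x y * Real.sin (y / 2) ^ (-(1 / 2) : ℝ) ≤ Real.sin (x / 2) ^ (-(1 / 2) : ℝ) * G y := by
  obtain ⟨hp, -, -⟩ := half_angle hx
  obtain ⟨r, hr, hpr, h0⟩ := NN_root hp
  obtain ⟨hI, hv⟩ := Hr_int hr
  have hlt : Real.arctan r < π / 2 := Real.arctan_lt_pi_div_two r
  have hsub : Ioo 0 (4 * Real.arctan r) ⊆ Ioo 0 (2 * π) := Ioo_subset_Ioo_right (by linarith)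
  have hnn : ∀ y, 0 ≤ (Ioo 0 (4 * Real.arctan r)).indicator (Hr r) y := by
    intro y
    apply indicator_nonneg
    intro y _
    unfold Hr; positivity
  refine ⟨(Ioo 0 (4 * Real.arctan r)).indicator (Hr r), ?_, hnn, ?_, ?_⟩
  · exact ((integrable_indicator_iff measurableSet_Ioo).2 hI).integrableOn
  · rw [setIntegral_indicator measurableSet_Ioo, inter_eq_self_of_subset_right hsub, hv]
  · intro y hy hxy
    by_cases hyr : y < 4 * Real.arctan r
    · have hmem : y ∈ Ioo 0 (4 * Real.arctan r) := ⟨hy.1, hyr⟩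
      rw [indicator_of_mem hmem]
      apply K1_pointwise hx hr hpr h0 hy
      have := Real.tan_lt_tan_of_lt_of_lt_pi_div_two (x := y / 4) (y := Real.arctan r)
        (by linarith [hy.1, Real.pi_pos]) hlt (by linarith)
      rwa [Real.tan_arctan] at this
    · have hge : r ≤ Real.tan (y / 4) := by
        rw [not_lt] at hyr
        have := Real.strictMonoOn_tan.monotoneOn (a := Real.arctan r) (b := y / 4)
          ⟨Real.neg_pi_div_two_lt_arctan r, hlt⟩
          ⟨by linarith [hy.1, Real.pi_pos], by linarith [hy.2]⟩ (by linarith)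
        rwa [Real.tan_arctan] at this
      have hN := NN_nonpos hp hr h0 hge (tan_mul_lt hx hy hxy)
      have hF : ¬ 0 < Fm x y := by
        rw [Fm_eq hx hy, not_lt]
        apply div_nonpos_of_nonpos_of_nonneg (by linarith) (by positivity)
      unfold K1
      rw [if_neg hF, zero_mul]
      exact mul_nonneg (Real.rpow_nonneg (sin_half_pos hx).le _) (hnn y)

lemma K1_full {x : ℝ} (hx : x ∈ Ioo (0 : ℝ) (2 * π)) :
    ∃ G : ℝ → ℝ, IntegrableOn G (Ioo 0 (2 * π)) ∧
      ∫ y in Ioo 0 (2 * π), G y = 8 * π ∧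
      ∀ y ∈ Ioo (0 : ℝ) (2 * π),
        K1 x y * Real.sin (y / 2) ^ (-(1 / 2) : ℝ) ≤ Real.sin (x / 2) ^ (-(1 / 2) : ℝ) * G y := by
  obtain ⟨G, hG, hG0, hGv, hGb⟩ := K1_half hx
  obtain ⟨G', hG', hG0', hGv', hGb'⟩ := K1_half (refl_mem hx)
  have hs := sin_half_pos hx
  have hs' : 0 ≤ Real.sin (x / 2) ^ (-(1 / 2) : ℝ) := Real.rpow_nonneg hs.le _
  refine ⟨fun y => G y + G' (2 * π - y), hG.add (integrable_refl hG'), ?_, ?_⟩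
  · rw [integral_add hG (integrable_refl hG'), hGv, ← int_II_eq (fun y => G' (2 * π - y)),
      ← int_II_reflect, int_II_eq, hGv']
    ring
  · intro y hy
    have m1 := mul_nonneg hs' (hG0 y)
    have m2 := mul_nonneg hs' (hG0' (2 * π - y))
    rw [mul_add]
    rcases lt_trichotomy (x + y) (2 * π) with h | h | h
    · linarith [hGb y hy h]
    · have hF : ¬ 0 < Fm x y := by
        have : y = 2 * π - x := by linarith
        rw [this]
        unfold Fm
        rw [sin_refl, cos_refl]
        nlinarith
      have : K1 x y = 0 := by unfold K1; rw [if_neg hF]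
      rw [this, zero_mul]
      linarith
    · have := hGb' _ (refl_mem hy) (by linarith)
      rw [K1_refl, sin_refl, sin_refl] at this
      linarith

lemma g_bound {ε lam y : ℝ} (hε : ε ∈ Ioo (0 : ℝ) (3 / 5)) (hl : lam ∈ Ioo (0 : ℝ) 1)
    (hy : y ∈ Ioo (0 : ℝ) (2 * π)) :
    |VV y ^ (-(1 : ℝ) / 2) * (√(WW y) / (WW y + lam) * omg' y)| ≤
      lam ^ (-(1 / 10) - ε / 2) * Real.sin (y / 2) ^ (-(1 / 2) + 5 * ε / 6) := by
  have hs := sin_half_pos hy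
  have hV := VV_pos hy
  have hVl := VV_lower hy
  have ho : |omg' y| ≤ 1 := by
    unfold omg'
    rw [if_neg hy.1.ne', abs_le]
    constructor <;> linarith [Real.cos_le_one (y / 2), Real.neg_one_le_cos (y / 2)]
  have hW : WW y = Real.sin (y / 2) ^ 2 * VV y := rfl
  have hWp : 0 < WW y := by rw [hW]; positivity
  have hl0 := hl.1
  have e1 : VV y ^ (-(1 : ℝ) / 2) * √(WW y) = Real.sin (y / 2) := by
    rw [hW, Real.sqrt_mul (by positivity), Real.sqrt_sq hs.le, neg_div, Real.rpow_neg hV.le,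
      ← Real.sqrt_eq_rpow]
    have : 0 < √(VV y) := Real.sqrt_pos.2 hV
    field_simp
  have e2 : VV y ^ (-(1 : ℝ) / 2) * (√(WW y) / (WW y + lam) * omg' y) =
      Real.sin (y / 2) / (WW y + lam) * omg' y := by
    rw [← e1]; ring
  have hWl : Real.sin (y / 2) ^ (5 / 3 : ℝ) ≤ WW y := by
    have : Real.sin (y / 2) ^ (5 / 3 : ℝ) =
        Real.sin (y / 2) ^ 2 * Real.sin (y / 2) ^ (-(1 / 3) : ℝ) := by
      rw [← Real.rpow_natCast, ← Real.rpow_add hs]; norm_num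
    rw [this, hW]; gcongr
  have hθ : 0 < 9 / 10 - ε / 2 := by linarith [hε.2]
  have hθ' : 0 < 1 / 10 + ε / 2 := by linarith [hε.1]
  have hY := Real.geom_mean_le_arith_mean2_weighted hθ.le hθ'.le hWp.le hl0.le (by ring)
  have hY2 : WW y ^ (9 / 10 - ε / 2) * lam ^ (1 / 10 + ε / 2) ≤ WW y + lam := by
    refine hY.trans ?_
    have := hε.1
    have := hε.2
    nlinarith
  have hY3 : (Real.sin (y / 2) ^ (5 / 3 : ℝ)) ^ (9 / 10 - ε / 2) * lam ^ (1 / 10 + ε / 2) ≤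
      WW y + lam := by
    refine le_trans ?_ hY2
    gcongr
  rw [e2, abs_mul, abs_of_pos (by positivity)]
  calc Real.sin (y / 2) / (WW y + lam) * |omg' y|
      ≤ Real.sin (y / 2) / (WW y + lam) * 1 := by gcongr
    _ ≤ Real.sin (y / 2) /
        ((Real.sin (y / 2) ^ (5 / 3 : ℝ)) ^ (9 / 10 - ε / 2) * lam ^ (1 / 10 + ε / 2)) := by
        rw [mul_one]; gcongr
    _ = _ := by
        rw [← Real.rpow_mul hs.le, show -(1 / 10) - ε / 2 = -(1 / 10 + ε / 2) by ring,
          Real.rpow_neg hl0.le,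
          show -(1 / 2) + 5 * ε / 6 = 1 - 5 / 3 * (9 / 10 - ε / 2) by ring,
          Real.rpow_sub hs, Real.rpow_one]
        field_simp

lemma phi_bound {ε : ℝ} (hε : ε ∈ Ioo (0 : ℝ) (3 / 5)) :
    ∃ C : ℝ, 0 < C ∧ ∀ lam ∈ Ioo (0 : ℝ) 1, ∀ x ∈ Ioo (0 : ℝ) (2 * π),
      |phiLam lam x| ≤ C * lam ^ (-(1 / 10) - ε / 2) * Real.sin (x / 2) ^ (-(1 / 3) : ℝ) := by
  have hε1 := hε.1
  have hε2 := hε.2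
  have hint := integrable_sin_rpow (a := 1 - 5 * ε / 6) (by linarith) (by linarith)
  set A := ∫ y in Ioo 0 (2 * π), Real.sin (y / 2) ^ (-(1 - 5 * ε / 6)) with hA
  have hA0 : 0 ≤ A := setIntegral_nonneg measurableSet_Ioo
    fun y hy => Real.rpow_nonneg (sin_half_pos hy).le _
  refine ⟨2 * A + 8 * π, by positivity, ?_⟩
  intro lam hl x hx
  have hl0 := hl.1
  have hs := sin_half_pos hx
  obtain ⟨G, hG, hGv, hGb⟩ := K1_full hx
  have hV := VV_pos hx
  have hVx : VV x ^ (-(1 : ℝ) / 2) ≤ Real.sin (x / 2) ^ (1 / 6 : ℝ) := by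
    have := Real.rpow_le_rpow_of_nonpos (Real.rpow_pos_of_pos hs _) (VV_lower hx)
      (show -(1 : ℝ) / 2 ≤ 0 by norm_num)
    rw [← Real.rpow_mul hs.le] at this
    convert this using 2
    norm_num
  set L := lam ^ (-(1 / 10) - ε / 2) with hL
  have hL0 : 0 < L := Real.rpow_pos_of_pos hl0 _
  have hS0 : 0 < Real.sin (x / 2) ^ (-(1 / 3) : ℝ) := Real.rpow_pos_of_pos hs _
  have hbd : ∀ y ∈ Ioo (0 : ℝ) (2 * π),
      ‖Bker x y * (√(WW y) / (WW y + lam) * omg' y)‖ ≤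
      L * Real.sin (x / 2) ^ (-(1 / 3) : ℝ) *
        (2 * Real.sin (y / 2) ^ (-(1 - 5 * ε / 6)) + G y) := by
    intro y hy
    have ht := sin_half_pos hy
    have hg := g_bound hε hl hy
    have k1 := K1_nonneg x y
    have k2 := K2_nonneg x y
    have hK : |2 * K2 x y - K1 x y| ≤ 2 * K2 x y + K1 x y := by
      rw [abs_le]; constructor <;> linarith
    have b2 : K2 x y * Real.sin (y / 2) ^ (-(1 / 2) + 5 * ε / 6) ≤
        Real.sin (x / 2) ^ (-(1 / 2) : ℝ) * Real.sin (y / 2) ^ (-(1 - 5 * ε / 6)) := by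
      have h := mul_le_mul_of_nonneg_right (K2_le hx hy)
        (Real.rpow_nonneg ht.le (-(1 / 2) + 5 * ε / 6))
      rw [mul_assoc, ← Real.rpow_add ht] at h
      rwa [show (-(1 / 2) : ℝ) + (-(1 / 2) + 5 * ε / 6) = -(1 - 5 * ε / 6) by ring] at h
    have b1 : K1 x y * Real.sin (y / 2) ^ (-(1 / 2) + 5 * ε / 6) ≤
        Real.sin (x / 2) ^ (-(1 / 2) : ℝ) * G y := by
      refine le_trans ?_ (hGb y hy)
      apply mul_le_mul_of_nonneg_left _ k1
      exact Real.rpow_le_rpow_of_exponent_ge ht (Real.sin_le_one _) (by linarith)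
    have hsum : 0 ≤ Real.sin (x / 2) ^ (-(1 / 2) : ℝ) *
        (2 * Real.sin (y / 2) ^ (-(1 - 5 * ε / 6)) + G y) := by
      have t0 : 0 ≤ Real.sin (y / 2) ^ (-(1 / 2) + 5 * ε / 6) := Real.rpow_nonneg ht.le _
      have := mul_nonneg k1 t0
      have := mul_nonneg k2 t0
      rw [mul_add]; linarith
    have hVn : 0 ≤ VV x ^ (-(1 : ℝ) / 2) := Real.rpow_nonneg hV.le _
    have hexp : Real.sin (x / 2) ^ (1 / 6 : ℝ) * Real.sin (x / 2) ^ (-(1 / 2) : ℝ) =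
        Real.sin (x / 2) ^ (-(1 / 3) : ℝ) := by
      rw [← Real.rpow_add hs]; norm_num
    have e : Bker x y * (√(WW y) / (WW y + lam) * omg' y) =
        VV x ^ (-(1 : ℝ) / 2) * ((2 * K2 x y - K1 x y) *
          (VV y ^ (-(1 : ℝ) / 2) * (√(WW y) / (WW y + lam) * omg' y))) := by
      unfold Bker; ring
    rw [e, Real.norm_eq_abs, abs_mul, abs_of_nonneg hVn, abs_mul]
    calc VV x ^ (-(1 : ℝ) / 2) * (|2 * K2 x y - K1 x y| *
          |VV y ^ (-(1 : ℝ) / 2) * (√(WW y) / (WW y + lam) * omg' y)|)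
        ≤ VV x ^ (-(1 : ℝ) / 2) * ((2 * K2 x y + K1 x y) *
          (L * Real.sin (y / 2) ^ (-(1 / 2) + 5 * ε / 6))) := by gcongr
      _ = VV x ^ (-(1 : ℝ) / 2) * (L * (2 * (K2 x y * Real.sin (y / 2) ^ (-(1 / 2) + 5 * ε / 6)) +
          K1 x y * Real.sin (y / 2) ^ (-(1 / 2) + 5 * ε / 6))) := by ring
      _ ≤ VV x ^ (-(1 : ℝ) / 2) * (L *
          (2 * (Real.sin (x / 2) ^ (-(1 / 2) : ℝ) * Real.sin (y / 2) ^ (-(1 - 5 * ε / 6))) +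
          Real.sin (x / 2) ^ (-(1 / 2) : ℝ) * G y)) := by gcongr
      _ = VV x ^ (-(1 : ℝ) / 2) * (L * (Real.sin (x / 2) ^ (-(1 / 2) : ℝ) *
          (2 * Real.sin (y / 2) ^ (-(1 - 5 * ε / 6)) + G y))) := by ring
      _ ≤ Real.sin (x / 2) ^ (1 / 6 : ℝ) * (L * (Real.sin (x / 2) ^ (-(1 / 2) : ℝ) *
          (2 * Real.sin (y / 2) ^ (-(1 - 5 * ε / 6)) + G y))) :=
          mul_le_mul_of_nonneg_right hVx (mul_nonneg hL0.le hsum)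
      _ = _ := by rw [← hexp]; ring
  have hdom : Integrable (fun y => L * Real.sin (x / 2) ^ (-(1 / 3) : ℝ) *
        (2 * Real.sin (y / 2) ^ (-(1 - 5 * ε / 6)) + G y)) (volume.restrict (Ioo 0 (2 * π))) :=
    ((hint.const_mul 2).add hG).const_mul _
  have h := norm_integral_le_of_norm_le hdom
    ((ae_restrict_mem measurableSet_Ioo).mono hbd)
  rw [integral_const_mul, integral_add (hint.const_mul 2) hG, integral_const_mul, hGv, ← hA,
    ← int_II_eq] at h
  rw [Real.norm_eq_abs] at h
  unfold phiLam
  linarith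

/-- **Corollary 6.4.**  For every `0 < ε < 3/5` there is `c_ε > 0` with
`‖φ_λ‖² ≤ c_ε λ^{−1/5−ε}` for all `0 < λ < 1`; moreover `P φ_λ = −φ_λ`
(i.e. `φ_λ(2π−x) = −φ_λ(x)` on `(0,2π)`). -/
theorem phiLam_norm_bound_and_antisymmetry :
    (∀ ε ∈ Set.Ioo (0 : ℝ) (3 / 5), ∃ c > (0 : ℝ),
      ∀ lam ∈ Set.Ioo (0 : ℝ) 1,
        (∫ x in II, phiLam lam x ^ 2) ≤ c * lam ^ (-(1 : ℝ) / 5 - ε)) ∧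
    (∀ lam ∈ Set.Ioo (0 : ℝ) 1, ∀ x ∈ Set.Ioo (0 : ℝ) (2 * π),
      phiLam lam (2 * π - x) = -phiLam lam x) := by
  refine ⟨?_, fun lam _ x _ => phi_antisymm lam x⟩
  intro ε hε
  obtain ⟨C, hC, hb⟩ := phi_bound hε
  have hint := integrable_sin_rpow (a := 2 / 3) (by norm_num) (by norm_num)
  set A := ∫ y in Ioo 0 (2 * π), Real.sin (y / 2) ^ (-(2 / 3) : ℝ) with hA
  have hA0 : 0 ≤ A := setIntegral_nonneg measurableSet_Ioo
    fun y hy => Real.rpow_nonneg (sin_half_pos hy).le _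
  refine ⟨C ^ 2 * A + 1, by positivity, ?_⟩
  intro lam hl
  have hl0 := hl.1
  have hP : 0 < lam ^ (-(1 : ℝ) / 5 - ε) := Real.rpow_pos_of_pos hl0 _
  have hpt : ∀ x ∈ Ioo (0 : ℝ) (2 * π), phiLam lam x ^ 2 ≤
      C ^ 2 * lam ^ (-(1 : ℝ) / 5 - ε) * Real.sin (x / 2) ^ (-(2 / 3) : ℝ) := by
    intro x hx
    have hs := sin_half_pos hx
    have h := pow_le_pow_left₀ (abs_nonneg _) (hb lam hl x hx) 2
    rw [sq_abs] at h
    refine h.trans (le_of_eq ?_)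
    rw [mul_pow, mul_pow, ← Real.rpow_natCast (lam ^ _), ← Real.rpow_mul hl0.le,
      ← Real.rpow_natCast (Real.sin (x / 2) ^ _), ← Real.rpow_mul hs.le]
    have e1 : (-(1 / 10) - ε / 2) * ((2 : ℕ) : ℝ) = -(1 : ℝ) / 5 - ε := by push_cast; ring
    have e2 : (-(1 / 3) : ℝ) * ((2 : ℕ) : ℝ) = -(2 / 3) := by push_cast; ring
    rw [e1, e2]
  rw [int_II_eq]
  have h := integral_mono_of_nonneg (μ := volume.restrict (Ioo 0 (2 * π)))
    (ae_of_all _ fun x => sq_nonneg (phiLam lam x))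
    (hint.const_mul (C ^ 2 * lam ^ (-(1 : ℝ) / 5 - ε)))
    ((ae_restrict_mem measurableSet_Ioo).mono hpt)
  rw [integral_const_mul, ← hA] at h
  linarith
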